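/- Let h2 be a nonzero real number. For all probability measures μ and ν on ℝ, if μ.bind(v ↦ N(h2·v, 1)) = ν.bind(v ↦ N(h2·v, 1)), then μ = ν. In words: the Gaussian channel v ↦ N(h2·v,1) with nonzero gain h2 acts injectively on input distributions, so equal output laws of the relay-to-destination channel force equal laws of the forwarded symbols. -/

import Mathlib

open MeasureTheory ProbabilityTheory

/-! The channel adds independent Gaussian noise to the scaled input, so its output law is the
convolution of the scaled input law with a Gaussian. The characteristic function of a Gaussian has
no zeros, hence the noise can be divided out on the Fourier side; this recovers the law of the
scaled input, and the scaling is invertible because the gain is nonzero. -/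

section AdditiveNoise

variable {α M : Type*} [MeasurableSpace α] [AddMonoid M] [MeasurableSpace M] [MeasurableAdd₂ M]

lemma measurable_map_const_add (ρ : Measure M) [SFinite ρ] :
    Measurable fun x : M => ρ.map (x + ·) := by
  simp only [← Measure.dirac_conv, Measure.conv, Measure.dirac_prod]
  exact (Measure.measurable_map _ measurable_add).comp Measurable.map_prodMk_left

lemma bind_map_const_add_eq_conv (μ : Measure α) {f : α → M} (hf : Measurable f) (ρ : Measure M)
    [SFinite ρ] : μ.bind (fun a => ρ.map (f a + ·)) = μ.map f ∗ ρ := by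
  have hρ : Measurable fun a => ρ.map (f a + ·) := (measurable_map_const_add ρ).comp hf
  refine Measure.ext_of_lintegral _ fun g hg => ?_
  calc ∫⁻ y, g y ∂μ.bind (fun a => ρ.map (f a + ·))
      = ∫⁻ a, ∫⁻ y, g y ∂ρ.map (f a + ·) ∂μ :=
        Measure.lintegral_bind hρ.aemeasurable hg.aemeasurable
    _ = ∫⁻ a, ∫⁻ z, g (f a + z) ∂ρ ∂μ :=
        lintegral_congr fun a => lintegral_map hg (measurable_const_add (f a))
    _ = ∫⁻ x, ∫⁻ z, g (x + z) ∂ρ ∂μ.map f :=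
        (lintegral_map (hg.comp measurable_add).lintegral_prod_right' hf).symm
    _ = ∫⁻ y, g y ∂(μ.map f ∗ ρ) := (Measure.lintegral_conv hg).symm

end AdditiveNoise

lemma conv_right_cancel_of_charFun_ne_zero {E : Type*} [NormedAddCommGroup E]
    [InnerProductSpace ℝ E] [CompleteSpace E] [SecondCountableTopology E] [MeasurableSpace E]
    [BorelSpace E] {μ ν ρ : Measure E} [IsFiniteMeasure μ] [IsFiniteMeasure ν] [IsFiniteMeasure ρ]
    (hρ : ∀ t, charFun ρ t ≠ 0) (h : μ ∗ ρ = ν ∗ ρ) : μ = ν := by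
  refine Measure.ext_of_charFun (funext fun t => mul_right_cancel₀ (hρ t) ?_)
  rw [← charFun_conv, ← charFun_conv, h]

lemma charFun_gaussianReal_ne_zero (m : ℝ) (v : NNReal) (t : ℝ) :
    charFun (gaussianReal m v) t ≠ 0 := by
  rw [charFun_gaussianReal]
  exact Complex.exp_ne_zero _

section GaussianChannel

variable {α : Type*} [MeasurableSpace α] {f : α → ℝ}

lemma bind_gaussianReal_eq_conv (μ : Measure α) (hf : Measurable f) (v : NNReal) :
    μ.bind (fun a => gaussianReal (f a) v) = μ.map f ∗ gaussianReal 0 v := by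
  simpa only [gaussianReal_map_const_add, zero_add] using
    bind_map_const_add_eq_conv μ hf (gaussianReal 0 v)

theorem gaussian_channel_injective_general (hf : MeasurableEmbedding f) {v : NNReal}
    {μ ν : Measure α} [IsFiniteMeasure μ] [IsFiniteMeasure ν]
    (h : μ.bind (fun a => gaussianReal (f a) v) = ν.bind (fun a => gaussianReal (f a) v)) :
    μ = ν := by
  rw [bind_gaussianReal_eq_conv μ hf.measurable, bind_gaussianReal_eq_conv ν hf.measurable] at h
  have hmap : μ.map f = ν.map f :=
    conv_right_cancel_of_charFun_ne_zero (charFun_gaussianReal_ne_zero 0 v) h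
  exact hf.map_injective hmap

end GaussianChannel

/-- **Injectivity of the Gaussian channel with nonzero gain on input laws.**
For `h2 ≠ 0`, if two probability measures `μ, ν` on `ℝ` produce the same output law
through the channel `v ↦ N(h2⬝v, 1)`, then `μ = ν`. -/
theorem gaussian_channel_injective (h2 : ℝ) (hh2 : h2 ≠ 0)
    (μ ν : Measure ℝ) [IsProbabilityMeasure μ] [IsProbabilityMeasure ν]
    (h : μ.bind (fun v => gaussianReal (h2 * v) 1) =
         ν.bind (fun v => gaussianReal (h2 * v) 1)) :
    μ = ν :=
  gaussian_channel_injective_general (measurableEmbedding_mulLeft₀ hh2) h
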